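/- With Λ' as above, let v := ((1,0,0,0), 0) ∈ Λ'. (1) If d₁ is congruent modulo ℤ⁴ to one of (1/2,1/2,1/2,0), (1/2,1/2,0,0), (1/2,1/2,0,1/2), (0,1/2,1/2,1/2), then {⟨v,x⟩ : x ∈ Λ'} = ℤ, i.e. v has level 1 in Λ'. (2) If d₁ is congruent modulo ℤ⁴ to (0,0,1/2,1/2) or (1/2,0,1/2,1/2), then {⟨v,x⟩ : x ∈ Λ'} = 2ℤ, i.e. v has level 2 in Λ'. -/

import Mathlib

/-!
STATEMENT 13: With `Λ'` as in the context and `v := ((1,0,0,0),0) ∈ Λ'`: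
(1) if `d₁` is congruent mod ℤ⁴ to one of (1/2,1/2,1/2,0), (1/2,1/2,0,0),
(1/2,1/2,0,1/2), (0,1/2,1/2,1/2), then `{⟨v,x⟩ : x ∈ Λ'} = ℤ` (level 1);
(2) if `d₁` is congruent mod ℤ⁴ to (0,0,1/2,1/2) or (1/2,0,1/2,1/2), then
`{⟨v,x⟩ : x ∈ Λ'} = 2ℤ` (level 2).
-/

noncomputable section
namespace Stmt13

/-- The bilinear form of K = U(2) ⊕ U(2) on ℚ⁴ (ℚ-bilinear extension):
Gram matrix has blocks [[0,2],[2,0]] and [[0,2],[2,0]]. -/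
def bK (x y : Fin 4 → ℚ) : ℚ :=
  2 * (x 0 * y 1 + x 1 * y 0) + 2 * (x 2 * y 3 + x 3 * y 2)

/-- The bilinear form of E = E8(2) on ℚ⁸ (ℚ-bilinear extension):
Gram matrix is −2 times the E8 Cartan matrix. -/
def bE (x y : Fin 8 → ℚ) : ℚ :=
  ∑ i : Fin 8, ∑ j : Fin 8, x i * ((-2 * CartanMatrix.E₈ i j : ℤ) : ℚ) * y j

/-- `x` lies in the lattice ℤ⁴ ⊂ ℚ⁴. -/
def isInt4 (x : Fin 4 → ℚ) : Prop := ∀ i, ∃ n : ℤ, x i = n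

/-- `x` lies in the lattice ℤ⁸ ⊂ ℚ⁸. -/
def isInt8 (x : Fin 8 → ℚ) : Prop := ∀ i, ∃ n : ℤ, x i = n

/-- `x` lies in the dual lattice (1/2)ℤ⁴ ⊂ ℚ⁴ of K. -/
def isHalf4 (x : Fin 4 → ℚ) : Prop := ∀ i, ∃ n : ℤ, x i = n / 2

/-- `x` lies in the dual lattice (1/2)ℤ⁸ ⊂ ℚ⁸ of E. -/
def isHalf8 (x : Fin 8 → ℚ) : Prop := ∀ i, ∃ n : ℤ, x i = n / 2

/-- The ambient space ℚ⁴ ⊕ ℚ⁸ of K ⊕ E. -/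
abbrev V : Type := (Fin 4 → ℚ) × (Fin 8 → ℚ)

/-- The orthogonal direct sum form of K ⊕ E on ℚ⁴ ⊕ ℚ⁸. -/
def bV (x y : V) : ℚ := bK x.1 y.1 + bE x.2 y.2

/-- Membership in the lattice Λ' = ℤ·(d₁,d₂) + (ℤ⁴ ⊕ ℤ⁸) ⊂ ℚ⁴ ⊕ ℚ⁸. -/
def memL (d₁ : Fin 4 → ℚ) (d₂ : Fin 8 → ℚ) (x : V) : Prop :=
  ∃ n : ℤ, isInt4 (x.1 - (n : ℚ) • d₁) ∧ isInt8 (x.2 - (n : ℚ) • d₂)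

/-- `v = ((1,0,0,0), 0)`. -/
def v : V := (![1, 0, 0, 0], 0)

/-!
As `v` is the first basis vector of a copy of `U(2)`, `⟨v, x⟩` is twice the second coordinate
`x.1 1`. Over `Λ'` this coordinate runs through `ℤ · d₁ 1 + ℤ`, so, for half-integral `d₁`, the
level of `v` depends only on whether `d₁ 1` lies in `1/2 + ℤ` or in `ℤ`.
-/

lemma bV_v (x : V) : bV v x = 2 * x.1 1 := by
  simp [bV, bK, bE, v]

lemma exists_eq_add_of_isInt4_sub {x y : Fin 4 → ℚ} (h : isInt4 (x - y)) (i : Fin 4) :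
    ∃ m : ℤ, x i = m + y i :=
  (h i).imp fun _ => eq_add_of_sub_eq

lemma memL_smul_add_intCast {d₁ : Fin 4 → ℚ} {d₂ : Fin 8 → ℚ}
    (n : ℤ) (a : Fin 4 → ℤ) (b : Fin 8 → ℤ) :
    memL d₁ d₂ ((n : ℚ) • d₁ + fun i => (a i : ℚ), (n : ℚ) • d₂ + fun i => (b i : ℚ)) :=
  ⟨n, fun i => ⟨a i, by simp⟩, fun i => ⟨b i, by simp⟩⟩

lemma setOf_bV_v_eq (d₁ : Fin 4 → ℚ) (d₂ : Fin 8 → ℚ) :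
    {t : ℚ | ∃ x : V, memL d₁ d₂ x ∧ bV v x = t} =
      {t : ℚ | ∃ n k : ℤ, t = 2 * (n * d₁ 1 + k)} := by
  ext t
  constructor
  · rintro ⟨x, ⟨n, hx, -⟩, rfl⟩
    obtain ⟨k, hk⟩ : ∃ k : ℤ, x.1 1 = k + n * d₁ 1 := exists_eq_add_of_isInt4_sub hx 1
    exact ⟨n, k, by rw [bV_v, hk, add_comm]⟩
  · rintro ⟨n, k, rfl⟩
    exact ⟨_, memL_smul_add_intCast n (fun _ => k) 0, by simp [bV_v]⟩

lemma setOf_two_mul_add_half_eq_int (m : ℤ) :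
    {t : ℚ | ∃ n k : ℤ, t = 2 * (n * (m + 1 / 2) + k)} = {t : ℚ | ∃ n : ℤ, t = n} := by
  ext t
  constructor
  · rintro ⟨n, k, rfl⟩
    exact ⟨n * (2 * m + 1) + 2 * k, by push_cast; ring⟩
  · rintro ⟨n, rfl⟩
    exact ⟨n, -(n * m), by push_cast; ring⟩

lemma setOf_two_mul_add_int_eq_two_mul_int (m : ℤ) :
    {t : ℚ | ∃ n k : ℤ, t = 2 * (n * m + k)} = {t : ℚ | ∃ n : ℤ, t = 2 * n} := by
  ext t
  constructor
  · rintro ⟨n, k, rfl⟩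
    exact ⟨n * m + k, by push_cast; rfl⟩
  · rintro ⟨n, rfl⟩
    exact ⟨0, n, by simp⟩

theorem statement13_general (d₁ : Fin 4 → ℚ) (d₂ : Fin 8 → ℚ) :
    ((∃ m : ℤ, d₁ 1 = m + 1 / 2) →
      {t : ℚ | ∃ x : V, memL d₁ d₂ x ∧ bV v x = t} = {t : ℚ | ∃ n : ℤ, t = n}) ∧
    ((∃ m : ℤ, d₁ 1 = m) →
      {t : ℚ | ∃ x : V, memL d₁ d₂ x ∧ bV v x = t} = {t : ℚ | ∃ n : ℤ, t = 2 * n}) :=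
  ⟨fun ⟨m, hm⟩ => by rw [setOf_bV_v_eq, hm, setOf_two_mul_add_half_eq_int],
    fun ⟨m, hm⟩ => by rw [setOf_bV_v_eq, hm, setOf_two_mul_add_int_eq_two_mul_int]⟩

theorem statement13 (d₁ : Fin 4 → ℚ) (d₂ : Fin 8 → ℚ)
    (hd₁ : isHalf4 d₁) (hd₁' : ¬ isInt4 d₁)
    (hd₂ : isHalf8 d₂) (hd₂' : ¬ isInt8 d₂)
    (heven : ∃ k : ℤ, bK d₁ d₁ + bE d₂ d₂ = 2 * k) :
    ((isInt4 (d₁ - ![1/2, 1/2, 1/2, 0]) ∨ isInt4 (d₁ - ![1/2, 1/2, 0, 0]) ∨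
        isInt4 (d₁ - ![1/2, 1/2, 0, 1/2]) ∨ isInt4 (d₁ - ![0, 1/2, 1/2, 1/2])) →
      {t : ℚ | ∃ x : V, memL d₁ d₂ x ∧ bV v x = t} = {t : ℚ | ∃ n : ℤ, t = n}) ∧
    ((isInt4 (d₁ - ![0, 0, 1/2, 1/2]) ∨ isInt4 (d₁ - ![1/2, 0, 1/2, 1/2])) →
      {t : ℚ | ∃ x : V, memL d₁ d₂ x ∧ bV v x = t} = {t : ℚ | ∃ n : ℤ, t = 2 * n}) := by
  refine ⟨fun h => (statement13_general d₁ d₂).1 ?_, fun h => (statement13_general d₁ d₂).2 ?_⟩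
  · rcases h with h | h | h | h <;> exact exists_eq_add_of_isInt4_sub h 1
  · rcases h with h | h <;> simpa using exists_eq_add_of_isInt4_sub h 1

end Stmt13
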